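/- Let X be a monotonically retractable space. Then every countably compact subset A of X is closed in X. -/

import Mathlib

/-- ω-monotone assignment. -/
def OmegaMonotone {X Y : Type*} (N : Set X → Set Y) : Prop :=
  (∀ A : Set X, A.Countable → (N A).Countable) ∧
  (∀ A B : Set X, A.Countable → B.Countable → A ⊆ B → N A ⊆ N B) ∧
  (∀ u : ℕ → Set X, (∀ n, (u n).Countable) → (∀ n, u n ⊆ u (n + 1)) →
    N (⋃ n, u n) = ⋃ n, N (u n))

/-- A space is monotonically retractable. -/
def MonotonicallyRetractable (X : Type*) [TopologicalSpace X] : Prop :=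
  ∃ (r : Set X → X → X) (N : Set X → Set (Set X)),
    OmegaMonotone N ∧
    ∀ A : Set X, A.Countable →
      Continuous (r A) ∧ r A ∘ r A = r A ∧ A ⊆ Set.range (r A) ∧
      (∀ U : Set X, IsOpen U → ∃ M ⊆ N A, (r A) ⁻¹' U = ⋃₀ M)

/-- A subset is countably compact: every countable open cover has a finite
subcover. -/
def IsCountablyCompactSet {X : Type*} [TopologicalSpace X] (S : Set X) : Prop :=
  ∀ U : ℕ → Set X, (∀ n, IsOpen (U n)) → S ⊆ ⋃ n, U n →
    ∃ t : Finset ℕ, S ⊆ ⋃ n ∈ t, U n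

/-!
Let `x` be in the closure of a countably compact set `A`. Since the assignment `N` is `ω`-monotone,
a closing-off argument yields a countable `B` containing `x` such that every member of `N B` that
meets `A` meets it in a point of `B`. For the corresponding retraction `r`, this makes `x` a limit
of points of `A` fixed by `r`. On the other hand the fixed points of `r` form a closed set with a
countable network, so those lying in `A` form a countably compact Lindelöf set, which is compact
and hence closed. It therefore contains `x`.
-/

open Set Function

/-- `N` is a network of the map `f`: every preimage of an open set is a union of members of `N`.
This is the network condition of `MonotonicallyRetractable`, for an arbitrary map. -/
def IsNetworkOf {X Y : Type*} [TopologicalSpace Y] (N : Set (Set X)) (f : X → Y) : Prop :=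
  ∀ U : Set Y, IsOpen U → ∃ M ⊆ N, f ⁻¹' U = ⋃₀ M

namespace IsNetworkOf

variable {X Y : Type*} [TopologicalSpace Y] {N : Set (Set X)} {f : X → Y}

theorem exists_mem_subset_preimage (hf : IsNetworkOf N f) {U : Set Y} (hU : IsOpen U) {x : X}
    (hx : f x ∈ U) : ∃ M ∈ N, x ∈ M ∧ M ⊆ f ⁻¹' U := by
  obtain ⟨S, hSN, hS⟩ := hf U hU
  obtain ⟨M, hMS, hxM⟩ : x ∈ ⋃₀ S := hS ▸ hx
  exact ⟨M, hSN hMS, hxM, hS ▸ subset_sUnion_of_mem hMS⟩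

theorem isHereditarilyLindelof_range (hf : IsNetworkOf N f) (hN : N.Countable) :
    IsHereditarilyLindelof (range f) := by
  refine fun T hT => isLindelof_of_countable_subcover fun U hUo hTU => ?_
  have : Countable {M ∈ N | ∃ i, M ⊆ f ⁻¹' U i} := (hN.mono (sep_subset _ _)).to_subtype
  choose i hi using fun M : {M ∈ N | ∃ i, M ⊆ f ⁻¹' U i} => M.2.2
  refine ⟨range i, countable_range i, fun y hy => ?_⟩
  obtain ⟨x, rfl⟩ := hT hy
  obtain ⟨j, hj⟩ := mem_iUnion.1 (hTU hy)
  obtain ⟨M, hMN, hxM, hMU⟩ := hf.exists_mem_subset_preimage (hUo j) hj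
  exact mem_biUnion (mem_range_self ⟨M, hMN, j, hMU⟩) (hi _ hxM)

theorem image_closure_subset_closure_image [TopologicalSpace X] (hf : IsNetworkOf N f)
    (hfc : Continuous f) {A C : Set X}
    (hAC : ∀ M ∈ N, (M ∩ A).Nonempty → (M ∩ C).Nonempty) :
    f '' closure A ⊆ closure (f '' C) := by
  rintro _ ⟨x, hx, rfl⟩
  refine mem_closure_iff.2 fun U hU hxU => ?_
  obtain ⟨a, haU, haA⟩ := mem_closure_iff.1 hx (f ⁻¹' U) (hU.preimage hfc) hxU
  obtain ⟨M, hMN, haM, hMU⟩ := hf.exists_mem_subset_preimage hU haU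
  obtain ⟨c, hcM, hcC⟩ := hAC M hMN ⟨a, haM, haA⟩
  exact ⟨f c, hMU hcM, mem_image_of_mem f hcC⟩

end IsNetworkOf

theorem OmegaMonotone.exists_countable_superset_biUnion_subset {X Y : Type*}
    {N : Set X → Set Y} (hN : OmegaMonotone N) {g : Y → Set X} (hg : ∀ y, (g y).Countable)
    {C : Set X} (hC : C.Countable) :
    ∃ B : Set X, B.Countable ∧ C ⊆ B ∧ ⋃ y ∈ N B, g y ⊆ B := by
  obtain ⟨hN_countable, -, hN_iUnion⟩ := hN
  let u : ℕ → Set X := fun n => (fun B => B ∪ ⋃ y ∈ N B, g y)^[n] C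
  have hu_succ (n : ℕ) : u (n + 1) = u n ∪ ⋃ y ∈ N (u n), g y := iterate_succ_apply' _ n C
  have hu_countable (n : ℕ) : (u n).Countable := by
    induction n with
    | zero => exact hC
    | succ n ih =>
      rw [hu_succ]
      exact ih.union ((hN_countable _ ih).biUnion fun y _ => hg y)
  have hu_mono (n : ℕ) : u n ⊆ u (n + 1) := hu_succ n ▸ subset_union_left
  refine ⟨⋃ n, u n, countable_iUnion hu_countable, subset_iUnion u 0, ?_⟩
  rw [hN_iUnion u hu_countable hu_mono, biUnion_iUnion]
  refine iUnion_mono' fun n => ⟨n + 1, ?_⟩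
  rw [hu_succ]
  exact subset_union_right

theorem OmegaMonotone.exists_countable_superset_inter_nonempty {X Y : Type*}
    {N : Set X → Set Y} (hN : OmegaMonotone N) (P : Y → Set X) {C : Set X} (hC : C.Countable) :
    ∃ B : Set X, B.Countable ∧ C ⊆ B ∧ ∀ y ∈ N B, (P y).Nonempty → (P y ∩ B).Nonempty := by
  obtain ⟨B, hB, hCB, hNB⟩ := hN.exists_countable_superset_biUnion_subset
    (g := fun y => ⋃ h : (P y).Nonempty, {h.some})
    (fun _ => countable_iUnion fun _ => countable_singleton _) hC
  refine ⟨B, hB, hCB, fun y hy h => ⟨h.some, h.some_mem, hNB ?_⟩⟩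
  exact mem_biUnion hy (mem_iUnion.2 ⟨h, rfl⟩)

theorem MonotonicallyRetractable.exists_closure_inter_fixedPoints_subset {X : Type*}
    [TopologicalSpace X] (hX : MonotonicallyRetractable X) (A : Set X) {C : Set X}
    (hC : C.Countable) :
    ∃ (r : X → X) (N : Set (Set X)), Continuous r ∧ N.Countable ∧ IsNetworkOf N r ∧
      C ⊆ fixedPoints r ∧ closure A ∩ fixedPoints r ⊆ closure (A ∩ fixedPoints r) := by
  obtain ⟨r, N, hN, hr⟩ := hX
  obtain ⟨B, hB, hCB, hNB⟩ := hN.exists_countable_superset_inter_nonempty (fun M => M ∩ A) hC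
  obtain ⟨hcont, hidem, hB_range, hnet : IsNetworkOf (N B) (r B)⟩ := hr B hB
  have hB_fixed : B ⊆ fixedPoints (r B) := hB_range.trans (range_subset_iff.2 (congrFun hidem))
  have himage : r B '' closure A ⊆ closure (r B '' (A ∩ B)) :=
    hnet.image_closure_subset_closure_image hcont fun M hM => by
      simpa only [inter_assoc] using hNB M hM
  have hAB_fixed : r B '' (A ∩ B) ⊆ A ∩ fixedPoints (r B) := by
    rintro _ ⟨b, ⟨hbA, hbB⟩, rfl⟩
    rw [hB_fixed hbB]
    exact ⟨hbA, hB_fixed hbB⟩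
  refine ⟨r B, N B, hcont, hN.1 B hB, hnet, hCB.trans hB_fixed, fun x ⟨hxA, hx⟩ => ?_⟩
  exact closure_mono hAB_fixed (himage ⟨x, hxA, hx⟩)

theorem isCountablyCompactSet_iff_isCountablyCompact {X : Type*} [TopologicalSpace X]
    {S : Set X} : IsCountablyCompactSet S ↔ IsCountablyCompact S :=
  isCountablyCompact_iff_countable_open_cover.symm

theorem IsCountablyCompactSet.inter_right {X : Type*} [TopologicalSpace X] {S F : Set X}
    (hS : IsCountablyCompactSet S) (hF : IsClosed F) : IsCountablyCompactSet (S ∩ F) := by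
  rw [isCountablyCompactSet_iff_isCountablyCompact] at hS ⊢
  intro f _ _ hf
  obtain ⟨hfS, hfF⟩ := le_inf_iff.1 (hf.trans_eq Filter.inf_principal.symm)
  obtain ⟨a, haS, ha⟩ := hS hfS
  exact ⟨a, ⟨haS, isClosed_iff_clusterPt.1 hF a (ha.mono hfF)⟩, ha⟩

theorem countablyCompact_subset_of_monotonicallyRetractable_isClosed
    {X : Type*} [TopologicalSpace X] [T2Space X]
    (hX : MonotonicallyRetractable X)
    (A : Set X) (hA : IsCountablyCompactSet A) :
    IsClosed A := by
  refine isClosed_of_closure_subset fun x hx => ?_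
  obtain ⟨r, N, hr, hN, hnet, hx_fixed, hclosure⟩ :=
    hX.exists_closure_inter_fixedPoints_subset A (countable_singleton x)
  have hcc : IsCountablyCompact (A ∩ fixedPoints r) :=
    isCountablyCompactSet_iff_isCountablyCompact.1 (hA.inter_right (isClosed_fixedPoints hr))
  have hLindelof : IsLindelof (A ∩ fixedPoints r) :=
    (hnet.isHereditarilyLindelof_range hN).isLindelof_subset
      (inter_subset_right.trans fixedPoints_subset_range)
  have hclosed : IsClosed (A ∩ fixedPoints r) := (hLindelof.isCompact hcc).isClosed
  have hx_mem : x ∈ A ∩ fixedPoints r :=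
    hclosed.closure_subset (hclosure ⟨hx, hx_fixed rfl⟩)
  exact hx_mem.1
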